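/- For every infinite cardinal λ there exists an ordinal α such that the unitization over ℝ of the non-unital Banach algebra K(C([0,α],ℝ)) of compact operators on the Banach space C([0,α],ℝ) has a dense subset of cardinality at most 2^λ and, for every real Banach space E having a dense subset of cardinality at most λ, this unitization is not isomorphic as a ring to the Calkin algebra B(E)/K(E). -/

import Mathlib

open Cardinal

set_option synthInstance.maxHeartbeats 1000000

/-- The two-sided ideal of compact operators in `B(E)`, the algebra of bounded linear
operators on `E`. -/
def compactIdeal (𝕜 : Type*) [NontriviallyNormedField 𝕜]
    (E : Type*) [NormedAddCommGroup E] [NormedSpace 𝕜 E] : TwoSidedIdeal (E →L[𝕜] E) :=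
  TwoSidedIdeal.mk' {f : E →L[𝕜] E | IsCompactOperator f}
    isCompactOperator_zero
    (fun hf hg => hf.add hg)
    (fun hf => hf.neg)
    (fun {f _} hg => hg.clm_comp f)
    (fun {_ g} hf => hf.comp_clm g)

/-- The Calkin algebra `B(E)/K(E)`, as a quotient ring. -/
def Calkin (𝕜 : Type*) [NontriviallyNormedField 𝕜]
    (E : Type*) [NormedAddCommGroup E] [NormedSpace 𝕜 E] : Type _ :=
  (compactIdeal 𝕜 E).ringCon.Quotient

noncomputable instance (𝕜 : Type*) [NontriviallyNormedField 𝕜]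
    (E : Type*) [NormedAddCommGroup E] [NormedSpace 𝕜 E] : Ring (Calkin 𝕜 E) :=
  inferInstanceAs (Ring (compactIdeal 𝕜 E).ringCon.Quotient)

/-- The non-unital algebra `K(E)` of compact operators on `E`. -/
def compactOperators (𝕜 : Type*) [NontriviallyNormedField 𝕜]
    (E : Type*) [NormedAddCommGroup E] [NormedSpace 𝕜 E] :
    NonUnitalSubalgebra 𝕜 (E →L[𝕜] E) where
  carrier := {f : E →L[𝕜] E | IsCompactOperator f}
  add_mem' := fun hf hg => hf.add hg
  zero_mem' := isCompactOperator_zero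
  smul_mem' := fun c _ hf => hf.smul c
  mul_mem' := fun {_ g} hf _ => hf.comp_clm g

/-- The ordinal interval `[0, α]`, i.e. the set of ordinals `≤ α`, with its (order) topology,
is a compact space. -/
instance (α : Ordinal.{u}) : CompactSpace (Set.Iic α) := by
  rw [← isCompact_iff_compactSpace, ← Set.Icc_bot]
  exact isCompact_Icc


set_option linter.unusedSectionVars false

section PartA

variable {K : Type*} [LinearOrder K] [WellFoundedLT K] [TopologicalSpace K] [OrderTopology K]

theorem isOpen_Iic_wf (b : K) : IsOpen (Set.Iic b) := by
  by_cases h : ∃ c, b < c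
  · obtain ⟨c, hc, hmin⟩ := WellFounded.has_min (wellFounded_lt (α := K)) (Set.Ioi b) h
    have : Set.Iic b = Set.Iio c := by
      ext x
      simp only [Set.mem_Iic, Set.mem_Iio]
      constructor
      · intro hx; exact lt_of_le_of_lt hx hc
      · intro hx
        by_contra hb
        exact hmin x (not_le.mp hb) hx
    rw [this]; exact isOpen_Iio
  · have : Set.Iic b = Set.univ := by
      ext x; simp only [Set.mem_Iic, Set.mem_univ, iff_true]
      by_contra hb; exact h ⟨x, not_le.mp hb⟩
    rw [this]; exact isOpen_univ

/-- the indicator function of the clopen initial segment -/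
noncomputable def ee (b : K) : C(K, ℝ) :=
  ⟨Set.indicator (Set.Iic b) 1,
    (IsClopen.continuous_indicator ⟨isClosed_Iic, isOpen_Iic_wf b⟩ continuous_one)⟩

theorem ee_of_le {b x : K} (h : x ≤ b) : ee b x = 1 := by
  simp [ee, h]

theorem ee_of_lt {b x : K} (h : b < x) : ee b x = 0 := by
  simp [ee, h]

theorem ee_mul_ee {b c : K} (h : c ≤ b) : ee b * ee c = ee c := by
  ext x
  simp only [ContinuousMap.mul_apply]
  rcases le_or_gt x c with hx | hx
  · rw [ee_of_le hx, ee_of_le (hx.trans h), one_mul]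
  · rw [ee_of_lt hx, mul_zero]

theorem ee_abs_le (b x : K) : |ee b x| ≤ 1 := by
  rcases le_or_gt x b with hx | hx
  · rw [ee_of_le hx]; simp
  · rw [ee_of_lt hx]; simp

/-- local structure: at a point `b`, a continuous function to the reals is nearly constant on a
one-sided neighbourhood. -/
theorem exists_left {b c : K} (hc : c < b) {U : Set K} (hU : U ∈ nhds b) :
    ∃ d, c ≤ d ∧ d < b ∧ ∀ x, d < x → x ≤ b → x ∈ U := by
  obtain ⟨l, hl, h⟩ := exists_Ioc_subset_of_mem_nhds hU ⟨c, hc⟩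
  exact ⟨max l c, le_max_right _ _, max_lt hl hc, fun x h1 h2 =>
    h ⟨lt_of_le_of_lt (le_max_left _ _) h1, h2⟩⟩

theorem ee_top [OrderTop K] : ee (⊤ : K) = 1 := by
  ext x; rw [ee_of_le le_top]; rfl

variable [CompactSpace K]

theorem norm_le_one_of {g : C(K, ℝ)} {C : ℝ} (hC : 0 ≤ C) (h : ∀ x, |g x| ≤ C) : ‖g‖ ≤ C := by
  rw [ContinuousMap.norm_le _ hC]
  intro x; rw [Real.norm_eq_abs]; exact h x

theorem abs_apply_le {g : C(K, ℝ)} {C : ℝ} (h : ‖g‖ ≤ C) (x : K) : |g x| ≤ C := by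
  rw [← Real.norm_eq_abs]; exact (g.norm_coe_le_norm x).trans h

theorem abs_fun_le {μ : C(K, ℝ) →L[ℝ] ℝ} {M C : ℝ} (hμ : ‖μ‖ ≤ M) {g : C(K, ℝ)} (h : ‖g‖ ≤ C) :
    |μ g| ≤ M * C := by
  rw [← Real.norm_eq_abs]
  exact (μ.le_opNorm g).trans (mul_le_mul hμ h (norm_nonneg _) (μ.opNorm_nonneg.trans hμ))

/-- Main splitting lemma. -/
theorem lemmaA (P : Set (C(K, ℝ) →L[ℝ] ℝ)) (hP : P.Nonempty) {M : ℝ} (hM : ∀ μ ∈ P, ‖μ‖ ≤ M)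
    (b : K) {η : ℝ} (hη : 0 < η) :
    ∃ (h f : C(K, ℝ)) (c : ℚ), (h = 0 ∨ ∃ d, d < b ∧ h = ee d) ∧ (∃ μ ∈ P, (c : ℝ) < μ f) ∧
      ∀ μ ∈ P, (c : ℝ) < μ f → ∀ g : C(K, ℝ), ‖g‖ ≤ 1 →
        |μ (g * ee b) - μ (g * h) - g b * μ (ee b - h)| ≤ η := by
  have hM0 : 0 ≤ M := by
    obtain ⟨μ, hμ⟩ := hP
    exact μ.opNorm_nonneg.trans (hM μ hμ)
  by_cases hb : ∃ c, c < b
  swap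
  · refine ⟨0, 0, -1, Or.inl rfl, ?_, ?_⟩
    · obtain ⟨μ, hμ⟩ := hP
      exact ⟨μ, hμ, by simp⟩
    · intro μ _ _ g _
      have : g * ee b = g b • ee b := by
        ext x
        simp only [ContinuousMap.mul_apply, ContinuousMap.smul_apply, smul_eq_mul]
        rcases lt_trichotomy x b with hx | hx | hx
        · exact absurd ⟨x, hx⟩ hb
        · rw [hx]
        · rw [ee_of_lt hx]; simp
      rw [this]
      simp [hη.le]
  obtain ⟨c₀, hc₀⟩ := hb
  let A : Set ℝ := {r | ∃ μ ∈ P, ∃ f : C(K, ℝ), ‖f‖ ≤ 1 ∧ (∃ d, d < b ∧ f * ee d = f) ∧ r = μ f}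
  have hA : A.Nonempty := by
    obtain ⟨μ, hμ⟩ := hP
    exact ⟨0, μ, hμ, 0, by simp, ⟨c₀, hc₀, by simp⟩, by simp⟩
  have hAb : BddAbove A := by
    refine ⟨M, ?_⟩
    rintro r ⟨μ, hμ, f, hf, -, rfl⟩
    have := abs_fun_le (hM μ hμ) hf
    rw [mul_one] at this
    exact (le_abs_self _).trans this
  obtain ⟨r, ⟨μ₀, hμ₀, f, hf, ⟨d, hd, hfd⟩, rfl⟩, hr⟩ :=
    exists_lt_of_lt_csSup hA (show sSup A - η / 4 < sSup A by linarith)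
  obtain ⟨c, hc1, hc2⟩ := exists_rat_btwn hr
  refine ⟨ee d, f, c, Or.inr ⟨d, hd, rfl⟩, ⟨μ₀, hμ₀, hc2⟩, ?_⟩
  intro μ hμ hμc g hg
  -- small parameter
  obtain ⟨δ, hδ, hMδ⟩ : ∃ δ : ℝ, 0 < δ ∧ M * δ ≤ η / 2 := by
    refine ⟨η / (2 * (M + 1)), by positivity, ?_⟩
    rw [mul_div_assoc', div_le_div_iff₀ (by positivity) (by positivity)]
    nlinarith
  have hnb : {x | |g x - g b| < δ} ∈ nhds b := by
    have : Filter.Tendsto (fun x => |g x - g b|) (nhds b) (nhds |g b - g b|) := by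
      apply Continuous.tendsto; fun_prop
    rw [sub_self, abs_zero] at this
    exact this (Iio_mem_nhds hδ)
  obtain ⟨d', hdd', hd', hU⟩ := exists_left hd hnb
  set k : C(K, ℝ) := (g - g b • 1) * (ee b - ee d) with hk
  have e1 : μ (g * ee b) - μ (g * ee d) - g b * μ (ee b - ee d) = μ k := by
    have : k = g * ee b - g * ee d - g b • (ee b - ee d) := by
      ext x; simp [hk]; ring
    rw [this, μ.map_sub (g * ee b - g * ee d), μ.map_sub (g * ee b), μ.map_smul, smul_eq_mul]
  rw [e1]
  have hgx : ∀ x, |g x - g b| ≤ 2 := by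
    intro x
    have h1 := abs_apply_le hg x
    have h2 := abs_apply_le hg b
    calc |g x - g b| ≤ |g x| + |g b| := abs_sub _ _
      _ ≤ 2 := by linarith
  have hkx : ∀ x, k x = (g x - g b) * (ee b x - ee d x) := by
    intro x; simp [hk]
  set k' : C(K, ℝ) := k * ee d' with hk'
  have hk'x : ∀ x, k' x = k x * ee d' x := fun x => rfl
  have hkk' : ‖k - k'‖ ≤ δ := by
    apply norm_le_one_of hδ.le
    intro x
    rw [ContinuousMap.sub_apply, hk'x, hkx]
    rcases le_or_gt x d' with hx | hx
    · rw [ee_of_le hx]; simp [hδ.le]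
    · rw [ee_of_lt hx]
      rcases le_or_gt x b with hxb | hxb
      · rw [ee_of_le hxb, ee_of_lt (lt_of_le_of_lt hdd' hx)]
        have := hU x hx hxb
        simp only [Set.mem_ofPred_eq] at this
        simpa using this.le
      · rw [ee_of_lt hxb, ee_of_lt (hd.trans hxb)]; simp [hδ.le]
  have hfx : ∀ x, d < x → f x = 0 := by
    intro x hx
    rw [← hfd]; simp [ee_of_lt hx]
  have key : ∀ t : ℝ, |t| = 1 / 2 → t * μ k' < η / 4 := by
    intro t ht
    have hmem : μ (f + t • k') ∈ A := by
      refine ⟨μ, hμ, f + t • k', ?_, ⟨d', hd', ?_⟩, rfl⟩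
      · apply norm_le_one_of zero_le_one
        intro x
        simp only [ContinuousMap.add_apply, ContinuousMap.smul_apply, smul_eq_mul]
        rcases le_or_gt x d with hx | hx
        · rw [hk'x, hkx, ee_of_le hx, ee_of_le (hx.trans hd.le)]
          simpa using abs_apply_le hf x
        · rw [hfx x hx, zero_add, abs_mul, ht, hk'x, hkx, abs_mul, abs_mul, ee_of_lt hx, sub_zero]
          have h1 := hgx x
          have h2 := ee_abs_le b x
          have h3 := ee_abs_le d' x
          have h4 : |g x - g b| * |ee b x| ≤ 2 * 1 := mul_le_mul h1 h2 (abs_nonneg _) (by norm_num)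
          have h5 : |g x - g b| * |ee b x| * |ee d' x| ≤ (2 * 1) * 1 :=
            mul_le_mul h4 h3 (abs_nonneg _) (by norm_num)
          linarith
      · have h1 : f * ee d' = f := by
          rw [← hfd, mul_assoc, mul_comm (ee d), ee_mul_ee hdd']
        have h2 : k' * ee d' = k' := by
          rw [hk', mul_assoc, ee_mul_ee le_rfl]
        rw [add_mul, h1, smul_mul_assoc, h2]
    have := le_csSup hAb hmem
    rw [map_add, map_smul, smul_eq_mul] at this
    linarith
  have k1 := key (1 / 2) (by norm_num)
  have k2 := key (-(1 / 2)) (by norm_num)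
  have k3 := abs_fun_le (hM μ hμ) hkk'
  rw [map_sub] at k3
  rw [abs_le] at k3 ⊢
  constructor <;> linarith [k3.1, k3.2]

/-- evaluation functional -/
noncomputable def dl (t : K) : C(K, ℝ) →L[ℝ] ℝ := ContinuousMap.evalCLM ℝ t

theorem dl_apply (t : K) (g : C(K, ℝ)) : dl t g = g t := rfl

theorem norm_mul_ee_le {g : C(K, ℝ)} (hg : ‖g‖ ≤ 1) (b : K) : ‖g * ee b‖ ≤ 1 := by
  apply norm_le_one_of zero_le_one
  intro x
  rw [ContinuousMap.mul_apply, abs_mul]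
  exact mul_le_one₀ (abs_apply_le hg x) (abs_nonneg _) (ee_abs_le b x)

/-- The evaluation functionals span a dense subspace of the dual. -/
theorem lemmaB (μ : C(K, ℝ) →L[ℝ] ℝ) (b : K) : ∀ ε : ℝ, 0 < ε →
    ∃ ν ∈ Submodule.span ℝ (Set.range (dl (K := K))), ∀ g : C(K, ℝ), ‖g‖ ≤ 1 →
      |μ (g * ee b) - ν g| ≤ ε := by
  induction b using WellFoundedLT.induction with
  | ind b ih =>
  intro ε hε
  obtain ⟨h, f, c, hh, ⟨μ', hμ', hc⟩, H⟩ :=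
    lemmaA {μ} ⟨μ, rfl⟩ (M := ‖μ‖) (by rintro _ rfl; exact le_rfl) b (half_pos hε)
  obtain rfl : μ' = μ := hμ'
  have H := H μ' rfl hc
  obtain ⟨ν, hν, hν'⟩ : ∃ ν ∈ Submodule.span ℝ (Set.range (dl (K := K))), ∀ g : C(K, ℝ), ‖g‖ ≤ 1 →
      |μ' (g * h) - ν g| ≤ ε / 2 := by
    rcases hh with rfl | ⟨d, hd, rfl⟩
    · exact ⟨0, Submodule.zero_mem _, fun g _ => by simp; linarith⟩
    · exact ih d hd _ (half_pos hε)
  refine ⟨ν + μ' (ee b - h) • dl b, Submodule.add_mem _ hν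
    (Submodule.smul_mem _ _ (Submodule.subset_span ⟨b, rfl⟩)), ?_⟩
  intro g hg
  have h1 := H g hg
  have h2 := hν' g hg
  simp only [add_apply, smul_apply, smul_eq_mul, dl_apply]
  rw [abs_le] at *
  constructor <;> linarith [h1.1, h1.2, h2.1, h2.2]

/-- basic weak-star open sets -/
def US {X : Type*} [NormedAddCommGroup X] [NormedSpace ℝ X] (s : Finset (X × ℚ)) :
    Set (X →L[ℝ] ℝ) :=
  {μ | ∀ p ∈ s, (p.2 : ℝ) < μ p.1}

open Classical in
/-- fragmentability of the dual -/
theorem lemmaC (b : K) : ∀ (P : Set (C(K, ℝ) →L[ℝ] ℝ)) (_ : P.Nonempty) (M : ℝ)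
    (_ : ∀ μ ∈ P, ‖μ‖ ≤ M) (ε : ℝ) (_ : 0 < ε),
    ∃ s : Finset (C(K, ℝ) × ℚ), (P ∩ US s).Nonempty ∧
      ∀ μ ∈ P ∩ US s, ∀ ν ∈ P ∩ US s, ∀ g : C(K, ℝ), ‖g‖ ≤ 1 →
        |μ (g * ee b) - ν (g * ee b)| ≤ ε := by
  induction b using WellFoundedLT.induction with
  | ind b ih =>
  intro P hP M hM ε hε
  obtain ⟨h, f, c, hh, ⟨μ₁, hμ₁, hc⟩, H⟩ := lemmaA P hP hM b (η := ε / 8) (by linarith)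
  set P1 := {μ ∈ P | (c : ℝ) < μ f} with hP1
  have hP1n : P1.Nonempty := ⟨μ₁, hμ₁, hc⟩
  obtain ⟨s, hsn, hs⟩ : ∃ s : Finset (C(K, ℝ) × ℚ), (P1 ∩ US s).Nonempty ∧
      ∀ μ ∈ P1 ∩ US s, ∀ ν ∈ P1 ∩ US s, ∀ g : C(K, ℝ), ‖g‖ ≤ 1 →
        |μ (g * h) - ν (g * h)| ≤ ε / 8 := by
    rcases hh with rfl | ⟨d, hd, rfl⟩
    · refine ⟨∅, ⟨μ₁, ⟨hμ₁, hc⟩, by simp [US]⟩, ?_⟩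
      intros; simp; linarith
    · exact ih d hd P1 hP1n M (fun μ hμ => hM μ hμ.1) _ (by linarith)
  obtain ⟨μ₀, hμ₀, hμ₀s⟩ := hsn
  set k := ee b - h with hk
  obtain ⟨q1, hq1, hq1'⟩ := exists_rat_btwn (show μ₀ k - ε / 8 < μ₀ k by linarith)
  obtain ⟨q2, hq2, hq2'⟩ := exists_rat_btwn (show μ₀ (-k) - ε / 8 < μ₀ (-k) by linarith)
  refine ⟨insert (f, c) (insert (k, q1) (insert (-k, q2) s)), ⟨μ₀, hμ₀.1, ?_⟩, ?_⟩
  · intro p hp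
    simp only [Finset.mem_insert] at hp
    rcases hp with rfl | rfl | rfl | hp
    · exact hμ₀.2
    · exact hq1'
    · exact hq2'
    · exact hμ₀s p hp
  · have aux : ∀ μ ∈ P ∩ US (insert (f, c) (insert (k, q1) (insert (-k, q2) s))),
        μ ∈ P1 ∩ US s ∧ |μ k - μ₀ k| ≤ ε / 8 := by
      rintro μ ⟨hμ, hμs⟩
      have a1 := hμs (f, c) (by simp)
      have a2 := hμs (k, q1) (by simp)
      have a3 := hμs (-k, q2) (by simp)
      simp only [map_neg] at a1 a2 a3 hq2 hq2'
      refine ⟨⟨⟨hμ, a1⟩, fun p hp => hμs p (by simp [hp])⟩, ?_⟩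
      rw [abs_le]; constructor <;> linarith
    intro μ hμ ν hν g hg
    obtain ⟨m1, m2⟩ := aux μ hμ
    obtain ⟨n1, n2⟩ := aux ν hν
    have a1 := hs μ m1 ν n1 g hg
    have a2 := H μ m1.1.1 m1.1.2 g hg
    have a3 := H ν n1.1.1 n1.1.2 g hg
    have a4 : |g b * (μ k - ν k)| ≤ ε / 4 := by
      rw [abs_mul]
      have : |μ k - ν k| ≤ ε / 4 := by
        rw [abs_le] at *; constructor <;> linarith [m2.1, m2.2, n2.1, n2.2]
      have := mul_le_mul (abs_apply_le hg b) this (abs_nonneg _) zero_le_one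
      linarith
    rw [mul_sub] at a4
    rw [abs_le] at a1 a2 a3 a4 ⊢
    constructor <;> linarith [a1.1, a1.2, a2.1, a2.2, a3.1, a3.2, a4.1, a4.2]

/-- rank one operators -/
noncomputable def r1 {X Y : Type*} [NormedAddCommGroup X] [NormedSpace ℝ X]
    [NormedAddCommGroup Y] [NormedSpace ℝ Y] (f : X →L[ℝ] ℝ) (y : Y) : X →L[ℝ] Y :=
  f.smulRight y

theorem r1_apply {X Y : Type*} [NormedAddCommGroup X] [NormedSpace ℝ X]
    [NormedAddCommGroup Y] [NormedSpace ℝ Y] (f : X →L[ℝ] ℝ) (y : Y) (x : X) :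
    r1 f y x = f x • y := rfl

theorem r1_compact {X Y : Type*} [NormedAddCommGroup X] [NormedSpace ℝ X]
    [NormedAddCommGroup Y] [NormedSpace ℝ Y] (f : X →L[ℝ] ℝ) (y : Y) :
    IsCompactOperator (r1 f y) := by
  have h1 : IsCompactOperator f := by
    rw [isCompactOperator_iff_exists_mem_nhds_image_subset_compact]
    refine ⟨f ⁻¹' (Metric.closedBall 0 1), ?_, Metric.closedBall 0 1,
      isCompact_closedBall _ _, Set.image_preimage_subset _ _⟩
    apply f.continuous.continuousAt.preimage_mem_nhds
    rw [map_zero]; exact Metric.closedBall_mem_nhds _ one_pos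
  exact h1.clm_comp ((ContinuousLinearMap.id ℝ ℝ).smulRight y)

/-- The span of a small family of rank-one operators. -/
noncomputable def W (K : Type*) [LinearOrder K] [WellFoundedLT K] [TopologicalSpace K]
    [OrderTopology K] [CompactSpace K] : Submodule ℝ (C(K, ℝ) →L[ℝ] C(K, ℝ)) :=
  Submodule.span ℝ (Set.range fun p : K × K => r1 (dl p.1) (ee p.2))

theorem W_compact (S : C(K, ℝ) →L[ℝ] C(K, ℝ)) (hS : S ∈ W K) : IsCompactOperator S := by
  induction hS using Submodule.span_induction with
  | mem x h => obtain ⟨p, rfl⟩ := h; exact r1_compact _ _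
  | zero => exact isCompactOperator_zero
  | add x y _ _ hx hy => exact hx.add hy
  | smul a x _ hx => exact hx.smul a

theorem r1_mem_W {ν : C(K, ℝ) →L[ℝ] ℝ} (hν : ν ∈ Submodule.span ℝ (Set.range (dl (K := K))))
    (d : K) : r1 ν (ee d) ∈ W K := by
  induction hν using Submodule.span_induction with
  | mem x h => obtain ⟨p, rfl⟩ := h; exact Submodule.subset_span ⟨(p, d), rfl⟩
  | zero =>
    have : r1 (0 : C(K, ℝ) →L[ℝ] ℝ) (ee d) = 0 := by ext; simp [r1_apply]
    rw [this]; exact Submodule.zero_mem _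
  | add x y _ _ hx hy =>
    have : r1 (x + y) (ee d) = r1 x (ee d) + r1 y (ee d) := by ext; simp [r1_apply, add_mul]
    rw [this]; exact Submodule.add_mem _ hx hy
  | smul a x _ hx =>
    have : r1 (a • x) (ee d) = a • r1 x (ee d) := by ext; simp [r1_apply, mul_assoc]
    rw [this]; exact Submodule.smul_mem _ _ hx

theorem equicont (T : C(K, ℝ) →L[ℝ] C(K, ℝ)) (hT : IsCompactOperator T) (b : K) {ε : ℝ}
    (hε : 0 < ε) : ∃ U ∈ nhds b, ∀ x ∈ U, ∀ g : C(K, ℝ), ‖g‖ ≤ 1 → |T g x - T g b| ≤ ε := by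
  have hc := hT.isCompact_closure_image_closedBall 1
  obtain ⟨t, ht, hcov⟩ := Metric.totallyBounded_iff.mp hc.totallyBounded (ε / 4) (by linarith)
  refine ⟨⋂ y ∈ t, {x | |y x - y b| < ε / 4}, ?_, ?_⟩
  · rw [Filter.biInter_mem ht]
    intro y _
    have : Filter.Tendsto (fun x => |y x - y b|) (nhds b) (nhds |y b - y b|) := by
      apply Continuous.tendsto; fun_prop
    rw [sub_self, abs_zero] at this
    exact this (Iio_mem_nhds (by linarith))
  · intro x hx g hg
    have : T g ∈ closure (T '' Metric.closedBall 0 1) :=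
      subset_closure ⟨g, by simpa using hg, rfl⟩
    obtain ⟨y, hy, hgy⟩ := Set.mem_iUnion₂.mp (hcov this)
    have h1 : ‖T g - y‖ ≤ ε / 4 := by
      rw [Metric.mem_ball, dist_eq_norm] at hgy; exact hgy.le
    have h2 := abs_apply_le h1 x
    have h3 := abs_apply_le h1 b
    have h4 : |y x - y b| < ε / 4 := Set.mem_iInter₂.mp hx y hy
    rw [ContinuousMap.sub_apply] at h2 h3
    rw [abs_le] at *
    rw [abs_lt] at h4
    constructor <;> linarith [h2.1, h2.2, h3.1, h3.2, h4.1, h4.2]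

theorem lemmaD [OrderTop K] (T : C(K, ℝ) →L[ℝ] C(K, ℝ)) (hT : IsCompactOperator T) (b : K) :
    ∀ ε : ℝ, 0 < ε → ∃ S ∈ W K, ∀ g : C(K, ℝ), ‖g‖ ≤ 1 → ∀ x, |T g x * ee b x - S g x| ≤ ε := by
  induction b using WellFoundedLT.induction with
  | ind b ih =>
  intro ε hε
  obtain ⟨ν, hν, hν'⟩ := lemmaB ((dl b).comp T) ⊤ (ε / 4) (by linarith)
  obtain ⟨U, hU, hU'⟩ := equicont T hT b (ε := ε / 4) (by linarith)
  by_cases hb : ∃ c, c < b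
  · obtain ⟨c, hc⟩ := hb
    obtain ⟨d, -, hd, hdU⟩ := exists_left hc hU
    obtain ⟨S, hS, hS'⟩ := ih d hd (ε / 4) (by linarith)
    refine ⟨S + r1 ν (ee b) - r1 ν (ee d), Submodule.sub_mem _ (Submodule.add_mem _ hS
      (r1_mem_W hν b)) (r1_mem_W hν d), ?_⟩
    intro g hg x
    have h1 := hS' g hg x
    have h2 := hν' g hg
    rw [ee_top, mul_one, ContinuousLinearMap.comp_apply, dl_apply] at h2
    simp only [sub_apply, add_apply, r1_apply,
      ContinuousMap.sub_apply, ContinuousMap.add_apply, ContinuousMap.smul_apply, smul_eq_mul]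
    rcases le_or_gt x d with hx | hx
    · rw [ee_of_le hx, ee_of_le (hx.trans hd.le)]
      rw [ee_of_le hx] at h1
      rw [abs_le] at *; constructor <;> linarith [h1.1, h1.2]
    · rw [ee_of_lt hx] at h1 ⊢
      rcases le_or_gt x b with hxb | hxb
      · rw [ee_of_le hxb]
        have h3 := hU' x (hdU x hx hxb) g hg
        rw [abs_le] at *; constructor <;> linarith [h1.1, h1.2, h2.1, h2.2, h3.1, h3.2]
      · rw [ee_of_lt hxb]
        rw [abs_le] at *; constructor <;> linarith [h1.1, h1.2]
  · refine ⟨r1 ν (ee b), r1_mem_W hν b, ?_⟩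
    intro g hg x
    have h2 := hν' g hg
    rw [ee_top, mul_one, ContinuousLinearMap.comp_apply, dl_apply] at h2
    simp only [r1_apply, ContinuousMap.smul_apply, smul_eq_mul]
    rcases lt_trichotomy x b with hx | hx | hx
    · exact absurd ⟨x, hx⟩ hb
    · rw [hx, ee_of_le le_rfl]
      rw [abs_le] at *; constructor <;> linarith [h2.1, h2.2]
    · rw [ee_of_lt hx]; simp [hε.le]

theorem lemmaD' [OrderTop K] (T : C(K, ℝ) →L[ℝ] C(K, ℝ)) (hT : IsCompactOperator T)
    {ε : ℝ} (hε : 0 < ε) : ∃ S ∈ W K, ‖T - S‖ ≤ ε := by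
  obtain ⟨S, hS, h⟩ := lemmaD T hT ⊤ ε hε
  refine ⟨S, hS, ?_⟩
  apply ContinuousLinearMap.opNorm_le_of_unit_norm hε.le
  intro g hg
  apply norm_le_one_of hε.le
  intro x
  have := h g hg.le x
  rw [ee_of_le le_top, mul_one] at this
  exact this

end PartA

section PartF

variable {X Y : Type*} [NormedAddCommGroup X] [NormedSpace ℝ X]
  [NormedAddCommGroup Y] [NormedSpace ℝ Y]

/-- abstract description of the unitized algebra of compact operators -/
structure KRep (X : Type*) [NormedAddCommGroup X] [NormedSpace ℝ X] (A : Type*) [Ring A]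
    [Algebra ℝ A] where
  pp : A →ₐ[ℝ] (X →L[ℝ] X)
  RR : (X →L[ℝ] ℝ) → X → A
  pp_RR : ∀ f x, pp (RR f x) = r1 f x
  mul_RR : ∀ z f x, z * RR f x = RR f (pp z x)
  RR_mul : ∀ z f x, RR f x * z = RR (f.comp (pp z)) x
  RR_add : ∀ f x y, RR f (x + y) = RR f x + RR f y
  RR_smul : ∀ f (r : ℝ) x, RR f (r • x) = r • RR f x
  central : ∀ q, pp q = 0 → ∀ z, q * z = z * q

variable {A B : Type*} [Ring A] [Algebra ℝ A] [Ring B] [Algebra ℝ B]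

/-- identification of minimal non-central idempotents -/
theorem min_idemp (b : KRep Y B) (q : B) (hq : q * q = q) (hmin : ∀ z, ∃ r : ℝ, q * z * q = r • q)
    (hnc : ∃ z, q * z ≠ z * q) : ∃ (g : Y →L[ℝ] ℝ) (y : Y), g y = 1 ∧ q = b.RR g y := by
  have hpq : b.pp q ≠ 0 := by
    intro h0
    obtain ⟨z, hz⟩ := hnc
    apply hz
    exact b.central q h0 z
  obtain ⟨y, hy⟩ : ∃ y, b.pp q y ≠ 0 := by
    by_contra h
    push Not at h
    exact hpq (ContinuousLinearMap.ext h)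
  have hqq : b.pp q (b.pp q y) = b.pp q y := by
    have : b.pp (q * q) y = b.pp q y := by rw [hq]
    rw [map_mul] at this
    exact this
  set y0 := b.pp q y with hy0
  obtain ⟨f, hf⟩ := SeparatingDual.exists_eq_one (R := ℝ) hy
  obtain ⟨r, hr⟩ := hmin (b.RR f y0)
  rw [b.mul_RR, b.RR_mul, hqq] at hr
  have h1 : b.pp (b.RR (f.comp (b.pp q)) y0) y0 = b.pp (r • q) y0 := by rw [hr]
  rw [b.pp_RR, r1_apply, map_smul, smul_apply, hqq, ContinuousLinearMap.comp_apply, hqq, hf] at h1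
  have : r = 1 := (smul_left_injective ℝ hy h1).symm
  rw [this, one_smul] at hr
  refine ⟨f.comp (b.pp q), y0, ?_, hr.symm⟩
  rw [ContinuousLinearMap.comp_apply, hqq, hf]

theorem eidelheit [CompleteSpace X] [CompleteSpace Y] (a : KRep X A) (b : KRep Y B) (φ : A ≃+* B)
    (f0 : X →L[ℝ] ℝ) (x0 x1 : X) (h00 : f0 x0 = 1) (h01 : f0 x1 = 0) (hx1 : x1 ≠ 0) :
    Nonempty (X ≃L[ℝ] Y) := by
  set p : A := a.RR f0 x0 with hp
  have hpz : ∀ z, z * p = a.RR f0 (a.pp z x0) := fun z => a.mul_RR z f0 x0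
  have hpp : ∀ x, a.pp p x = f0 x • x0 := by intro x; rw [hp, a.pp_RR, r1_apply]
  have hpzp : ∀ z, p * z * p = f0 (a.pp z x0) • p := by
    intro z
    rw [mul_assoc, hpz, a.mul_RR, hpp, a.RR_smul]
  have hid : p * p = p := by rw [hpz, hpp, h00, one_smul]
  have hF : ∀ r : ℝ, f0 (a.pp (r • p) x0) = r := by
    intro r
    rw [map_smul, smul_apply, hpp, h00, one_smul, map_smul, h00, smul_eq_mul, mul_one]
  set q := φ p with hq
  have hqid : q * q = q := by rw [hq, ← map_mul, hid]
  have hsq : φ.symm q = p := by rw [hq, φ.symm_apply_apply]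
  -- scalars
  have hcor : ∀ r : ℝ, φ.symm (r • q) = f0 (a.pp (φ.symm (r • q)) x0) • p := by
    intro r
    have : q * (r • q) * q = r • q := by
      rw [mul_smul_comm, smul_mul_assoc, hqid, hqid]
    conv_lhs => rw [← this]
    rw [map_mul, map_mul, hsq, hpzp]
  let ρ : ℝ →+* ℝ :=
    { toFun := fun r => f0 (a.pp (φ.symm (r • q)) x0)
      map_one' := by
        simp only [one_smul]
        rw [hsq, hpp, h00, one_smul, h00]
      map_zero' := by simp
      map_add' := by intro r s; simp [add_smul]
      map_mul' := by
        intro r s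
        have h1 : (r * s) • q = (r • q) * (s • q) := by
          rw [smul_mul_smul_comm, hqid]
        have h2 : φ.symm ((r * s) • q) =
            (f0 (a.pp (φ.symm (r • q)) x0) * f0 (a.pp (φ.symm (s • q)) x0)) • p := by
          rw [h1, map_mul, hcor r, hcor s, smul_mul_smul_comm, hid, hF, hF]
        rw [h2, hF] }
  have hρ : ∀ r : ℝ, f0 (a.pp (φ.symm (r • q)) x0) = r := by
    intro r
    have : ρ = RingHom.id ℝ := Subsingleton.elim _ _
    exact congrArg (fun f : ℝ →+* ℝ => f r) this
  have hsc : ∀ r : ℝ, φ (r • p) = r • q := by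
    intro r
    have := hcor r
    rw [hρ] at this
    rw [← this, φ.apply_symm_apply]
  obtain ⟨g0, y0, hg, hqg⟩ : ∃ (g : Y →L[ℝ] ℝ) (y : Y), g y = 1 ∧ q = b.RR g y := by
    apply min_idemp b q hqid
    · intro z
      refine ⟨f0 (a.pp (φ.symm z) x0), ?_⟩
      rw [← hsc, ← hpzp, map_mul, map_mul, φ.apply_symm_apply]
    · refine ⟨φ (a.RR f0 x1), fun h => ?_⟩
      rw [hq, ← map_mul, ← map_mul] at h
      have h := φ.injective h
      have h' := congrArg (fun z => a.pp z x0) h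
      simp only [map_mul, hp, a.pp_RR] at h'
      simp [r1_apply, h00, h01] at h'
      exact hx1 h'.symm
  -- the map
  have hqz : ∀ z, z * q = b.RR g0 (b.pp z y0) := by intro z; rw [hqg, b.mul_RR]
  have hT : ∀ x, φ (a.RR f0 x) = b.RR g0 (b.pp (φ (a.RR f0 x)) y0) := by
    intro x
    rw [← hqz, hq, ← map_mul, hpz, a.pp_RR, r1_apply, h00, one_smul]
  have hS : ∀ y, φ.symm (b.RR g0 y) = a.RR f0 (a.pp (φ.symm (b.RR g0 y)) x0) := by
    intro y
    rw [← hpz, ← hsq, ← map_mul, hqz, b.pp_RR, r1_apply, hg, one_smul]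
  have hev : ∀ y, b.pp (b.RR g0 y) y0 = y := by intro y; rw [b.pp_RR, r1_apply, hg, one_smul]
  have hev' : ∀ x, a.pp (a.RR f0 x) x0 = x := by intro x; rw [a.pp_RR, r1_apply, h00, one_smul]
  have hqy : b.pp q y0 = y0 := by rw [hqg, hev]
  let T : Y ≃ₗ[ℝ] X := LinearEquiv.symm
    { toFun := fun x => b.pp (φ (a.RR f0 x)) y0
      invFun := fun y => a.pp (φ.symm (b.RR g0 y)) x0
      map_add' := by intro x y; simp only [a.RR_add, map_add, add_apply]
      map_smul' := by
        intro r x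
        have : a.RR f0 (r • x) = a.RR f0 x * (r • p) := by
          rw [mul_smul_comm, hpz, hev', a.RR_smul]
        simp only [this, map_mul, hsc, map_smul, RingHom.id_apply]
        rw [mul_apply_eq_comp, smul_apply, hqy, map_smul]
      left_inv := by
        intro x
        beta_reduce
        rw [← hT, φ.symm_apply_apply, hev']
      right_inv := by
        intro y
        beta_reduce
        rw [← hS, φ.apply_symm_apply, hev] }
  have hTT : ∀ y, b.pp (φ (a.RR f0 (T y))) y0 = y := fun y => T.symm_apply_apply y
  have hcont : ∀ f : X →L[ℝ] ℝ, Continuous fun y => f (T y) := by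
    intro f
    have key : ∀ y, f (T y) = g0 (b.pp (φ (a.RR f x0)) y) := by
      intro y
      have h1 : φ (a.RR f x0) * φ (a.RR f0 (T y)) = f (T y) • q := by
        rw [← hsc, ← map_mul, a.mul_RR, a.pp_RR, r1_apply, a.RR_smul]
      have h2 := congrArg (fun z => g0 (b.pp z y0)) h1
      simp only [map_mul, map_smul] at h2
      rw [mul_apply_eq_comp, hTT] at h2
      rw [h2, smul_apply, hqy, map_smul, hg, smul_eq_mul, mul_one]
    simp only [key]
    fun_prop
  have hTc : Continuous (T : Y →ₗ[ℝ] X) := by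
    apply LinearMap.continuous_of_seq_closed_graph
    intro u y x hu hTu
    by_contra hne
    obtain ⟨f, hf⟩ := SeparatingDual.exists_ne_zero (R := ℝ) (sub_ne_zero.mpr hne)
    apply hf
    rw [map_sub, sub_eq_zero]
    have l1 : Filter.Tendsto (fun n => f (T (u n))) Filter.atTop (nhds (f x)) :=
      (f.continuous.tendsto x).comp hTu
    have l2 : Filter.Tendsto (fun n => f (T (u n))) Filter.atTop (nhds (f (T y))) :=
      ((hcont f).tendsto y).comp hu
    exact tendsto_nhds_unique l1 l2
  exact ⟨(LinearEquiv.toContinuousLinearEquivOfContinuous T hTc).symm⟩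

end PartF

section PartG
variable {X : Type*} [NormedAddCommGroup X] [NormedSpace ℝ X]

/-- the unitized algebra -/
abbrev AA (X : Type*) [NormedAddCommGroup X] [NormedSpace ℝ X] : Type _ :=
  Unitization ℝ (compactOperators ℝ X)

/-- canonical representation of the unitization -/
noncomputable def ppU : AA X →ₐ[ℝ] (X →L[ℝ] X) :=
  NonUnitalSubalgebra.unitization (compactOperators ℝ X)

/-- rank one operators inside the unitization -/
noncomputable def RU (f : X →L[ℝ] ℝ) (x : X) : AA X :=
  Unitization.inr ⟨r1 f x, r1_compact f x⟩

theorem ppU_eq (z : AA X) : ppU z = algebraMap ℝ (X →L[ℝ] X) z.fst + (z.snd : X →L[ℝ] X) := rfl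

theorem ppU_apply (z : AA X) (x : X) : ppU z x = z.fst • x + (z.snd : X →L[ℝ] X) x := rfl

theorem ppU_RU (f : X →L[ℝ] ℝ) (x : X) : ppU (RU f x) = r1 f x := by
  rw [ppU_eq]; simp [RU]

theorem mul_RU (z : AA X) (f : X →L[ℝ] ℝ) (x : X) : z * RU f x = RU f (ppU z x) := by
  apply Unitization.ext
  · simp [RU]
  · apply Subtype.ext
    ext y
    simp only [RU, ppU_apply, r1_apply, Unitization.snd_mul, Unitization.fst_inr, Unitization.snd_inr]
    simp [r1_apply, smul_comm z.fst]

theorem RU_mul (z : AA X) (f : X →L[ℝ] ℝ) (x : X) : RU f x * z = RU (f.comp (ppU z)) x := by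
  apply Unitization.ext
  · simp [RU]
  · apply Subtype.ext
    ext y
    simp only [RU, ppU_apply, r1_apply, Unitization.snd_mul, Unitization.fst_inr, Unitization.snd_inr]
    simp [r1_apply, ppU_apply, add_smul, mul_smul]

theorem RU_add (f : X →L[ℝ] ℝ) (x y : X) : RU f (x + y) = RU f x + RU f y := by
  apply Unitization.ext
  · simp [RU]
  · apply Subtype.ext
    ext y
    simp [RU, r1_apply]

theorem RU_smul (f : X →L[ℝ] ℝ) (r : ℝ) (x : X) : RU f (r • x) = r • RU f x := by
  apply Unitization.ext
  · simp [RU]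
  · apply Subtype.ext
    ext y
    simp [RU, r1_apply, smul_comm r]

theorem centralU (q : AA X) (hq : ppU q = 0) (z : AA X) : q * z = z * q := by
  have hs : ∀ y, (q.snd : X →L[ℝ] X) y = - (q.fst • y) := by
    intro y
    have : ppU q y = 0 := by rw [hq]; rfl
    rw [ppU_apply] at this
    exact eq_neg_of_add_eq_zero_right this
  apply Unitization.ext
  · simp [mul_comm]
  · apply Subtype.ext
    ext y
    simp only [Unitization.snd_mul]
    simp [hs]

/-- the representation of the unitization -/
noncomputable def repU (X : Type*) [NormedAddCommGroup X] [NormedSpace ℝ X] :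
    KRep X (AA X) where
  pp := ppU
  RR := RU
  pp_RR := ppU_RU
  mul_RR := mul_RU
  RR_mul := RU_mul
  RR_add := RU_add
  RR_smul := RU_smul
  central := centralU

theorem eidelheitU {X Y : Type*} [NormedAddCommGroup X] [NormedSpace ℝ X] [CompleteSpace X]
    [NormedAddCommGroup Y] [NormedSpace ℝ Y] [CompleteSpace Y]
    (φ : Unitization ℝ (compactOperators ℝ X) ≃+* Unitization ℝ (compactOperators ℝ Y))
    (f0 : X →L[ℝ] ℝ) (x0 x1 : X) (h00 : f0 x0 = 1) (h01 : f0 x1 = 0) (hx1 : x1 ≠ 0) :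
    Nonempty (X ≃L[ℝ] Y) :=
  eidelheit (repU X) (repU Y) φ f0 x0 x1 h00 h01 hx1

end PartG

section PartH

theorem sup_bound (κ : Cardinal.{u}) (hκ : ℵ₀ ≤ κ) {ι : Type v} (hι : lift.{u} #ι ≤ lift.{v} κ)
    (f : ι → Ordinal.{u}) (hf : ∀ i, f i < (Order.succ κ).ord) :
    ∃ θ < (Order.succ κ).ord, ∀ i, f i ≤ θ := by
  have h1 : lift.{u} #ι ≤ lift.{v} #κ.out := by rwa [Cardinal.mk_out]
  obtain ⟨e⟩ := Cardinal.lift_mk_le'.1 h1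
  let g : κ.out → Ordinal.{u} := Function.extend e f (fun _ => 0)
  refine ⟨iSup g, ?_, ?_⟩
  · apply Ordinal.iSup_lt_of_lt_cof
    · rw [Cardinal.mk_out, (Cardinal.isRegular_succ hκ).cof_ord]; exact Order.lt_succ κ
    · intro i
      by_cases h : ∃ j, e j = i
      · obtain ⟨j, rfl⟩ := h
        have h2 : g (e j) = f j := e.injective.extend_apply _ _ _
        exact h2.trans_lt (hf j)
      · have h2 : g i = 0 := Function.extend_apply' _ _ _ h
        exact h2.trans_lt (Cardinal.isRegular_succ hκ).ord_pos
  · intro i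
    have : f i = g (e i) := by simp only [g]; rw [e.injective.extend_apply]
    rw [this]
    exact Ordinal.le_iSup g (e i)

theorem pigeon (κ : Cardinal.{u}) (hκ : ℵ₀ ≤ κ) {Z : Type v} (hZ : lift.{u} #Z ≤ lift.{v} κ)
    (R : Ordinal.{u} → Z → Prop)
    (h : ∀ θ < (Order.succ κ).ord, ∃ α, θ ≤ α ∧ α < (Order.succ κ).ord ∧ ∃ z, R α z) :
    ∃ z, ∀ θ < (Order.succ κ).ord, ∃ α, θ ≤ α ∧ α < (Order.succ κ).ord ∧ R α z := by
  by_contra hc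
  push Not at hc
  choose f hf hf' using hc
  obtain ⟨θ, hθ, hb⟩ := sup_bound κ hκ hZ f hf
  obtain ⟨α, h1, h2, z, hz⟩ := h θ hθ
  exact hf' z α ((hb z).trans h1) h2 hz

end PartH

section PartI

/-- functionals coming from points of large rank -/
def PP (X : Type*) [NormedAddCommGroup X] [NormedSpace ℝ X] (Ω : Ordinal.{u}) (N : ℝ)
    (θ : Ordinal.{u}) : Set (X →L[ℝ] ℝ) :=
  {μ | ∃ α < Ω, ∃ T : X ≃L[ℝ] C(Set.Iic α, ℝ), (∀ x, ‖T x‖ ≤ N * ‖x‖) ∧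
    (∀ y, ‖T.symm y‖ ≤ N * ‖y‖) ∧ ∃ β : Set.Iic α, (β : Ordinal.{u}) ≠ 0 ∧
      Ordinal.omega0 ^ θ ∣ (β : Ordinal.{u}) ∧ ∀ x, μ x = T x β}

theorem omega_mul_lim (δ : Ordinal.{u}) (hδ : δ ≠ 0) :
    Order.IsSuccLimit (Ordinal.omega0 * δ) := by
  exact Ordinal.isSuccLimit_mul_left Ordinal.isSuccLimit_omega0 (pos_iff_ne_zero.2 hδ)

theorem opow_lt_succ (κ : Cardinal.{u}) (hκ : ℵ₀ ≤ κ) (θ : Ordinal.{u})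
    (hθ : θ < (Order.succ κ).ord) : Ordinal.omega0 ^ θ < (Order.succ κ).ord := by
  rw [Cardinal.lt_ord, Order.lt_succ_iff] at hθ ⊢
  refine (Ordinal.card_opow_le _ _).trans ?_
  simp only [Ordinal.card_omega0]
  exact max_le hκ (max_le hκ hθ)

theorem final_contra (κ : Cardinal.{u}) (hκ : ℵ₀ ≤ κ) (α0 : Ordinal.{u})
    (hX : #C(Set.Iic α0, ℝ) ≤ lift.{u + 1} κ) (N : ℝ) (hN : 0 < N)
    (h : ∀ θ < (Order.succ κ).ord, ∃ α, θ ≤ α ∧ α < (Order.succ κ).ord ∧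
      ∃ T : C(Set.Iic α0, ℝ) ≃L[ℝ] C(Set.Iic α, ℝ), (∀ x, ‖T x‖ ≤ N * ‖x‖) ∧
        (∀ y, ‖T.symm y‖ ≤ N * ‖y‖)) : False := by
  set Ω := (Order.succ κ).ord with hΩ
  have hlim : Order.IsSuccLimit Ω :=
    Cardinal.isSuccLimit_ord (hκ.trans (Order.le_succ κ))
  let Q : Ordinal.{u} → Set (C(Set.Iic α0, ℝ) →L[ℝ] ℝ) := PP C(Set.Iic α0, ℝ) Ω N
  have hcard : #(Finset (C(Set.Iic α0, ℝ) × ℚ)) ≤ lift.{u + 1} κ := by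
    have : Infinite (C(Set.Iic α0, ℝ) × ℚ) := Prod.infinite_of_right
    rw [Cardinal.mk_finset_of_infinite, Cardinal.mk_prod]
    have h1 : ℵ₀ ≤ lift.{u + 1} κ := Cardinal.aleph0_le_lift.2 hκ
    simp only [Cardinal.lift_uzero, Cardinal.mkRat, Cardinal.lift_aleph0]
    exact Cardinal.mul_le_of_le h1 hX h1
  have hanti : ∀ θ θ', θ ≤ θ' → Q θ' ⊆ Q θ := by
    rintro θ θ' hle μ ⟨α, hα, T, h1, h2, β, h3, h4, h5⟩
    exact ⟨α, hα, T, h1, h2, β, h3, (Ordinal.opow_dvd_opow _ hle).trans h4, h5⟩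
  have hf : ∀ s : Finset (C(Set.Iic α0, ℝ) × ℚ), ∃ θ < Ω,
      ((∃ θ' < Ω, ¬ (Q θ' ∩ US s).Nonempty) → ¬ (Q θ ∩ US s).Nonempty) := by
    intro s
    by_cases hs : ∃ θ' < Ω, ¬ (Q θ' ∩ US s).Nonempty
    · obtain ⟨θ', h1, h2⟩ := hs
      exact ⟨θ', h1, fun _ => h2⟩
    · exact ⟨0, hlim.bot_lt, fun h => absurd h hs⟩
  choose f hf1 hf2 using hf
  obtain ⟨θ, hθ, hb⟩ := sup_bound κ hκ (ι := Finset (C(Set.Iic α0, ℝ) × ℚ))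
    (by rw [Cardinal.lift_id'.{u, u+1}]; exact hcard) f hf1
  have hmeet : ∀ s, (Q θ ∩ US s).Nonempty → ∀ θ' < Ω, (Q θ' ∩ US s).Nonempty := by
    intro s hs θ' hθ'
    by_contra hc
    apply hf2 s ⟨θ', hθ', hc⟩
    exact hs.mono (Set.inter_subset_inter_left _ (hanti _ _ (hb s)))
  have hne : (Q θ).Nonempty := by
    obtain ⟨α, h1, h2, T, h3, h4⟩ := h _ (opow_lt_succ κ hκ θ hθ)
    refine ⟨(dl (⟨Ordinal.omega0 ^ θ, h1⟩ : Set.Iic α)).comp (T : _ →L[ℝ] _), α, h2, T, h3, h4,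
      ⟨Ordinal.omega0 ^ θ, h1⟩, ?_, dvd_rfl, fun x => rfl⟩
    exact (Ordinal.opow_pos _ Ordinal.omega0_pos).ne'
  have hbd : ∀ μ ∈ Q θ, ‖μ‖ ≤ N := by
    rintro μ ⟨α, hα, T, h1, h2, β, h3, h4, h5⟩
    apply ContinuousLinearMap.opNorm_le_bound _ hN.le
    intro x
    rw [h5 x]
    exact ((T x).norm_coe_le_norm β).trans (h1 x)
  obtain ⟨s, hs, hosc⟩ := lemmaC (⊤ : Set.Iic α0) (Q θ) hne N hbd (1 / (2 * N)) (by positivity)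
  obtain ⟨μ, ⟨α, hα, T, hT, hT', β, hβ0, hdvd, hμ⟩, hμs⟩ := hmeet s hs _ (hlim.succ_lt hθ)
  -- neighbourhood
  have hU : {t : Set.Iic α | ∀ p ∈ s, (p.2 : ℝ) < T p.1 t} ∈ nhds β := by
    have : {t : Set.Iic α | ∀ p ∈ s, (p.2 : ℝ) < T p.1 t} =
        ⋂ p ∈ s, {t : Set.Iic α | (p.2 : ℝ) < T p.1 t} := by ext; simp
    rw [this, Filter.biInter_finset_mem]
    intro p hp
    apply (isOpen_lt continuous_const (T p.1).continuous).mem_nhds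
    have := hμs p hp
    rw [hμ] at this
    exact this
  have hbot : (⟨0, Set.mem_Iic.2 zero_le⟩ : Set.Iic α) < β := by
    rw [← Subtype.coe_lt_coe]; exact pos_iff_ne_zero.2 hβ0
  obtain ⟨γ, -, hγβ, hγ⟩ := exists_left hbot hU
  obtain ⟨δ, hδ⟩ := hdvd
  rw [Ordinal.opow_succ, mul_assoc] at hδ
  have hδ0 : δ ≠ 0 := by rintro rfl; apply hβ0; rw [hδ]; simp
  have hγ' : (γ : Ordinal.{u}) < Ordinal.omega0 ^ θ * (Ordinal.omega0 * δ) := by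
    rw [← hδ]; exact hγβ
  rw [Ordinal.lt_mul_iff_of_isSuccLimit (omega_mul_lim δ hδ0)] at hγ'
  obtain ⟨η, hη, hγη⟩ := hγ'
  have hηβ : Ordinal.omega0 ^ θ * η < β := by
    rw [hδ]
    exact mul_lt_mul_of_pos_left hη (Ordinal.opow_pos _ Ordinal.omega0_pos)
  let β' : Set.Iic α := ⟨Ordinal.omega0 ^ θ * η, hηβ.le.trans β.2⟩
  have hβ'β : β' < β := hηβ
  have hγβ' : γ < β' := hγη
  have hν : (dl β').comp (T : _ →L[ℝ] C(Set.Iic α, ℝ)) ∈ Q θ ∩ US s := by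
    refine ⟨⟨α, hα, T, hT, hT', β', ?_, dvd_mul_right _ _, fun x => rfl⟩, ?_⟩
    · exact (lt_of_le_of_lt zero_le hγη).ne'
    · exact hγ β' hγβ' hβ'β.le
  have hμQ : μ ∈ Q θ ∩ US s :=
    ⟨hanti _ _ (Order.le_succ θ) ⟨α, hα, T, hT, hT', β, hβ0, by
      rw [hδ, Ordinal.opow_succ, ← mul_assoc]; exact dvd_mul_right _ _, hμ⟩, hμs⟩
  have hg : ‖N⁻¹ • T.symm (ee β')‖ ≤ 1 := by
    rw [norm_smul, norm_inv, Real.norm_eq_abs, abs_of_pos hN]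
    have h1 : ‖ee β'‖ ≤ 1 := norm_le_one_of zero_le_one (fun x => ee_abs_le β' x)
    have h2 := hT' (ee β')
    rw [inv_mul_le_iff₀ hN, mul_one]
    exact h2.trans (mul_le_of_le_one_right hN.le h1)
  have key := hosc _ hν μ hμQ _ hg
  rw [ee_top, mul_one, hμ] at key
  simp only [ContinuousLinearMap.comp_apply, ContinuousLinearEquiv.coe_coe, dl_apply, map_smul,
    ContinuousLinearEquiv.apply_symm_apply, ContinuousMap.smul_apply, ee_of_le le_rfl,
    ee_of_lt hβ'β, smul_eq_mul] at key
  rw [mul_one, mul_zero, sub_zero, abs_of_pos (inv_pos.2 hN)] at key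
  have : 1 / (2 * N) < N⁻¹ := by
    rw [one_div, mul_inv]
    have := inv_pos.2 hN
    linarith
  linarith

end PartI

section PartJ

theorem isom_of_dist {Λ : Type u} {E F : Type v} [NormedAddCommGroup E] [NormedSpace ℝ E]
    [CompleteSpace E] [NormedAddCommGroup F] [NormedSpace ℝ F] [CompleteSpace F]
    (d : Λ → E) (d' : Λ → F) (hd : DenseRange d) (hd' : DenseRange d')
    (h : ∀ i j, dist (d i) (d j) = dist (d' i) (d' j)) : Nonempty (E ≃L[ℝ] F) := by
  let _ : PseudoMetricSpace Λ := PseudoMetricSpace.induced d inferInstance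
  have h1 : Isometry d := Isometry.of_dist_eq fun x y => rfl
  have h2 : Isometry d' := Isometry.of_dist_eq fun x y => (h x y).symm
  let p1 : AbstractCompletion Λ :=
    { space := E, coe := d, uniformStruct := inferInstance, complete := inferInstance,
      separation := inferInstance, isUniformInducing := h1.isUniformInducing, dense := hd }
  let p2 : AbstractCompletion Λ :=
    { space := F, coe := d', uniformStruct := inferInstance, complete := inferInstance,
      separation := inferInstance, isUniformInducing := h2.isUniformInducing, dense := hd' }
  let e : E ≃ᵤ F := p1.compareEquiv p2
  have he : ∀ i, e (d i) = d' i := fun i => p1.compare_coe p2 i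
  have hiso : Isometry e := by
    apply Isometry.of_dist_eq
    intro x y
    refine hd.induction_on₂ (p := fun x y => dist (e x) (e y) = dist x y) ?_ ?_ x y
    · apply isClosed_eq
      · have := e.continuous
        fun_prop
      · fun_prop
    · intro i j
      rw [he, he, h]
  let e' : E ≃ᵢ F := ⟨e.toEquiv, hiso⟩
  exact ⟨e'.toRealLinearIsometryEquiv.toContinuousLinearEquiv⟩

theorem mem_compactIdeal {E : Type*} [NormedAddCommGroup E] [NormedSpace ℝ E] (f : E →L[ℝ] E) :
    f ∈ compactIdeal ℝ E ↔ IsCompactOperator f := by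
  exact TwoSidedIdeal.mem_mk' _ _ _ _ _ _ _

theorem calkin_congr {E F : Type*} [NormedAddCommGroup E] [NormedSpace ℝ E]
    [NormedAddCommGroup F] [NormedSpace ℝ F] (e : E ≃L[ℝ] F) :
    Nonempty (Calkin ℝ E ≃+* Calkin ℝ F) := by
  let c : (E →L[ℝ] E) ≃+* (F →L[ℝ] F) := e.conjContinuousAlgEquiv.toAlgEquiv.toRingEquiv
  have hc : ∀ f, c f = (e : E →L[ℝ] F) ∘L f ∘L (e.symm : F →L[ℝ] E) := fun f => rfl
  refine ⟨RingCon.congr c ?_⟩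
  ext x y
  rw [RingCon.comap_rel]
  rw [TwoSidedIdeal.rel_iff, TwoSidedIdeal.rel_iff, mem_compactIdeal, mem_compactIdeal, ← map_sub]
  constructor
  · intro h
    have := (h.comp_clm (e.symm : F →L[ℝ] E)).clm_comp (e : E →L[ℝ] F)
    exact this
  · intro h
    have := (h.comp_clm (e : E →L[ℝ] F)).clm_comp (e.symm : F →L[ℝ] E)
    have h3 : ⇑(x - y) = ⇑(e.symm : F →L[ℝ] E) ∘ ⇑(c (x - y)) ∘ ⇑(e : E →L[ℝ] F) := by
      funext z
      simp [hc]
    rw [h3]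
    exact this

theorem exists_dense_fun {Λ : Type u} {E : Type u} [NormedAddCommGroup E]
    (h : ∃ D : Set E, Dense D ∧ #D ≤ #Λ) : ∃ d : Λ → E, DenseRange d := by
  obtain ⟨D, hD, hc⟩ := h
  obtain ⟨f⟩ : Nonempty (D ↪ Λ) := hc
  have : Nonempty D := hD.nonempty.to_subtype
  refine ⟨fun i => ((Function.invFun f i : D) : E), ?_⟩
  apply hD.mono
  intro x hx
  exact ⟨f ⟨x, hx⟩, by beta_reduce; rw [Function.leftInverse_invFun f.injective]⟩

theorem card_inv (Λ : Type u) (h : ℵ₀ ≤ #Λ) : #(Λ × Λ → ℝ) ≤ 2 ^ #Λ := by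
  rw [Cardinal.mk_arrow, Cardinal.mk_prod, Cardinal.mk_real]
  simp only [Cardinal.lift_uzero, Cardinal.lift_id, Cardinal.lift_continuum]
  rw [Cardinal.mul_eq_self h, ← Cardinal.two_power_aleph0, ← Cardinal.power_mul,
    Cardinal.aleph0_mul_eq h]

end PartJ

section PartK

theorem card_Iic_le (κ : Cardinal.{u}) (α : Ordinal.{u})
    (hα : α < (Order.succ κ).ord) (hκ : ℵ₀ ≤ κ) : #(Set.Iic α) ≤ lift.{u + 1} κ := by
  rw [Cardinal.lt_ord, Order.lt_succ_iff] at hα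
  have h1 : Set.Iic α = Set.Iio (α + 1) := by
    ext x; simp only [Set.mem_Iic, Set.mem_Iio, Order.lt_add_one_iff]
  rw [h1, Cardinal.mk_Iio_ordinal, Cardinal.lift_le, Ordinal.card_add_one]
  exact Cardinal.add_le_of_le hκ hα (Cardinal.one_le_aleph0.trans hκ)

theorem card_W (κ : Cardinal.{u}) (hκ : Cardinal.continuum ≤ κ) (α : Ordinal.{u})
    (hα : α < (Order.succ κ).ord) : #(W (Set.Iic α)) ≤ lift.{u + 1} κ := by
  have hκ0 : ℵ₀ ≤ κ := Cardinal.aleph0_le_continuum.trans hκ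
  let v := fun p : Set.Iic α × Set.Iic α => r1 (dl p.1) (ee p.2)
  have hsurj : Function.Surjective (fun c : (Set.Iic α × Set.Iic α →₀ ℝ) =>
      (⟨Finsupp.linearCombination ℝ v c, by
        unfold W
        rw [← Finsupp.range_linearCombination]
        exact LinearMap.mem_range_self _ _⟩ : W (Set.Iic α))) := by
    rintro ⟨S, hS⟩
    unfold W at hS
    rw [← Finsupp.range_linearCombination] at hS
    obtain ⟨c, hc⟩ := hS
    exact ⟨c, Subtype.ext hc⟩
  refine (Cardinal.mk_le_of_surjective hsurj).trans ?_
  have : Nonempty (Set.Iic α × Set.Iic α) := ⟨(⟨α, Set.mem_Iic.2 le_rfl⟩, ⟨α, Set.mem_Iic.2 le_rfl⟩)⟩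
  rw [Cardinal.mk_finsupp_lift_of_infinite']
  have h1 : #(Set.Iic α) ≤ lift.{u + 1} κ := card_Iic_le κ α hα hκ0
  have h2 : ℵ₀ ≤ lift.{u + 1} κ := Cardinal.aleph0_le_lift.2 hκ0
  simp only [Cardinal.mk_prod, Cardinal.mk_real, Cardinal.lift_continuum, Cardinal.lift_id,
    Cardinal.lift_uzero]
  apply max_le (Cardinal.mul_le_of_le h2 h1 h1)
  rw [← Cardinal.lift_continuum.{u + 1, u}, Cardinal.lift_le]
  exact hκ

/-- finite rank operators among compact ones -/
noncomputable def jW (K : Type*) [LinearOrder K] [WellFoundedLT K] [TopologicalSpace K]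
    [OrderTopology K] [CompactSpace K] (S : W K) : compactOperators ℝ C(K, ℝ) :=
  ⟨S.1, W_compact S.1 S.2⟩

theorem jW_dense (K : Type*) [LinearOrder K] [WellFoundedLT K] [TopologicalSpace K]
    [OrderTopology K] [CompactSpace K] [OrderTop K] : DenseRange (jW K) := by
  rw [Metric.denseRange_iff]
  rintro ⟨T, hT⟩ r hr
  obtain ⟨S, hS, h⟩ := lemmaD' T hT (half_pos hr)
  refine ⟨⟨S, hS⟩, ?_⟩
  rw [Subtype.dist_eq, dist_eq_norm]
  exact lt_of_le_of_lt h (half_lt_self hr)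

theorem dense_unit (κ : Cardinal.{u}) (hκ : Cardinal.continuum ≤ κ) (α : Ordinal.{u})
    (hα : α < (Order.succ κ).ord) :
    ∃ D : Set (Unitization ℝ (compactOperators ℝ C(Set.Iic α, ℝ))),
        Dense D ∧ #D ≤ Cardinal.lift.{u + 1} κ := by
  let h := (Unitization.uniformEquivProd (𝕜 := ℝ)
    (A := compactOperators ℝ C(Set.Iic α, ℝ))).symm
  let g : ℝ × W (Set.Iic α) → ℝ × compactOperators ℝ C(Set.Iic α, ℝ) :=
    Prod.map id (jW (Set.Iic α))
  have hg : DenseRange g := DenseRange.prodMap denseRange_id (jW_dense (Set.Iic α))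
  refine ⟨Set.range (h ∘ g), ?_, ?_⟩
  · exact h.surjective.denseRange.comp hg h.continuous
  · have hκ0 : ℵ₀ ≤ κ := Cardinal.aleph0_le_continuum.trans hκ
    refine Cardinal.mk_range_le.trans ?_
    rw [Cardinal.mk_prod]
    have h2 : ℵ₀ ≤ lift.{u + 1} κ := Cardinal.aleph0_le_lift.2 hκ0
    simp only [Cardinal.mk_real, Cardinal.lift_continuum, Cardinal.lift_id, Cardinal.lift_uzero]
    refine Cardinal.mul_le_of_le h2 ?_ (card_W κ hκ α hα)
    rw [← Cardinal.lift_continuum.{u + 1, u}, Cardinal.lift_le]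
    exact hκ

theorem card_CK (κ : Cardinal.{u}) (hκ : Cardinal.continuum ≤ κ) (hκω : κ ^ ℵ₀ = κ)
    (α : Ordinal.{u}) (hα : α < (Order.succ κ).ord) :
    #C(Set.Iic α, ℝ) ≤ Cardinal.lift.{u + 1} κ := by
  let f : W (Set.Iic α) → C(Set.Iic α, ℝ) := fun S => S.1 1
  have hf : DenseRange f := by
    rw [Metric.denseRange_iff]
    intro x r hr
    obtain ⟨S, hS, h⟩ := lemmaD' (r1 (dl (⟨α, Set.mem_Iic.2 le_rfl⟩ : Set.Iic α)) x) (r1_compact _ _)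
      (half_pos hr)
    refine ⟨⟨S, hS⟩, ?_⟩
    have h1 : x - S 1 = (r1 (dl (⟨α, Set.mem_Iic.2 le_rfl⟩ : Set.Iic α)) x - S) 1 := by
      rw [sub_apply, r1_apply, dl_apply, ContinuousMap.one_apply, one_smul]
    have h2 : ‖(1 : C(Set.Iic α, ℝ))‖ ≤ 1 := norm_le_one_of zero_le_one (by intro x; simp)
    rw [dist_eq_norm]
    change ‖x - S 1‖ < r
    rw [h1]
    refine lt_of_le_of_lt ?_ (half_lt_self hr)
    refine ((r1 (dl (⟨α, Set.mem_Iic.2 le_rfl⟩ : Set.Iic α)) x - S).le_opNorm 1).trans ?_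
    exact (mul_le_mul h h2 (norm_nonneg _) (half_pos hr).le).trans (mul_one _).le
  have hseq : ∀ x : C(Set.Iic α, ℝ), ∃ s : ℕ → W (Set.Iic α),
      Filter.Tendsto (fun n => f (s n)) Filter.atTop (nhds x) := by
    intro x
    obtain ⟨u, hu, hux⟩ := mem_closure_iff_seq_limit.1 (hf x)
    choose s hs using hu
    exact ⟨s, by simpa only [hs] using hux⟩
  choose s hs using hseq
  have hinj : Function.Injective s := by
    intro x y hxy
    apply tendsto_nhds_unique (hs x)
    rw [hxy]
    exact hs y
  refine (Cardinal.mk_le_of_injective hinj).trans ?_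
  rw [Cardinal.mk_arrow]
  simp only [Cardinal.lift_uzero, Cardinal.mk_nat, Cardinal.lift_aleph0, Cardinal.lift_id]
  refine (Cardinal.power_le_power_right (card_W κ hκ α hα)).trans ?_
  rw [← Cardinal.lift_aleph0.{u + 1, u}, ← Cardinal.lift_power, hκω]

end PartK

theorem interval_iso (α0 α : Ordinal.{u}) (h1α0 : 1 ≤ α0)
    (φ : Unitization ℝ (compactOperators ℝ C(Set.Iic α0, ℝ)) ≃+*
      Unitization ℝ (compactOperators ℝ C(Set.Iic α, ℝ))) :
    ∃ n : ℕ, ∃ T : C(Set.Iic α0, ℝ) ≃L[ℝ] C(Set.Iic α, ℝ),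
      (∀ x, ‖T x‖ ≤ ((n : ℝ) + 1) * ‖x‖) ∧ (∀ y, ‖T.symm y‖ ≤ ((n : ℝ) + 1) * ‖y‖) := by
  let b : Set.Iic α0 := ⟨0, Set.mem_Iic.2 zero_le⟩
  let o : Set.Iic α0 := ⟨1, h1α0⟩
  have hbo : b < o := by
    rw [← Subtype.coe_lt_coe]; exact zero_lt_one
  have hne : (1 - ee b : C(Set.Iic α0, ℝ)) ≠ 0 := by
    intro h
    have h2 := congrArg (fun g : C(Set.Iic α0, ℝ) => g o) h
    simp only [ContinuousMap.sub_apply, ee_of_lt hbo, ContinuousMap.one_apply,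
      ContinuousMap.zero_apply] at h2
    norm_num at h2
  obtain ⟨T⟩ := eidelheitU φ (dl b) 1 (1 - ee b)
    (by rw [dl_apply]; rfl)
    (by rw [dl_apply, ContinuousMap.sub_apply, ee_of_le le_rfl, ContinuousMap.one_apply, sub_self])
    hne
  let T1 : C(Set.Iic α0, ℝ) →L[ℝ] C(Set.Iic α, ℝ) := T
  let T2 : C(Set.Iic α, ℝ) →L[ℝ] C(Set.Iic α0, ℝ) := T.symm
  obtain ⟨n, hn⟩ := exists_nat_ge (max ‖T1‖ ‖T2‖)
  have h1 : ‖T1‖ ≤ (n : ℝ) + 1 := ((le_max_left _ _).trans hn).trans (le_add_of_nonneg_right zero_le_one)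
  have h2 : ‖T2‖ ≤ (n : ℝ) + 1 := ((le_max_right _ _).trans hn).trans (le_add_of_nonneg_right zero_le_one)
  refine ⟨n, T, fun x => ?_, fun y => ?_⟩
  · exact (T1.le_opNorm x).trans (mul_le_mul_of_nonneg_right h1 (norm_nonneg _))
  · exact (T2.le_opNorm y).trans (mul_le_mul_of_nonneg_right h2 (norm_nonneg _))

/-- For every infinite cardinal `λ` there exists an ordinal `α` such that the unitization over
`ℝ` of the non-unital Banach algebra `K(C([0,α],ℝ))` of compact operators on the Banach space
`C([0,α],ℝ)` has a dense subset of cardinality at most `2 ^ λ` and, for every real Banach space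
`E` having a dense subset of cardinality at most `λ`, this unitization is not isomorphic as a
ring to the Calkin algebra `B(E)/K(E)`. -/
theorem statement5 (lam : Cardinal.{u}) (hlam : Cardinal.aleph0 ≤ lam) :
    ∃ α : Ordinal.{u},
      (∃ D : Set (Unitization ℝ (compactOperators ℝ C(Set.Iic α, ℝ))),
        Dense D ∧ #D ≤ Cardinal.lift.{u + 1} (2 ^ lam)) ∧
      ∀ (E : Type u) [NormedAddCommGroup E] [NormedSpace ℝ E] [CompleteSpace E],
        (∃ D : Set E, Dense D ∧ #D ≤ lam) →
        IsEmpty ((Unitization ℝ (compactOperators ℝ C(Set.Iic α, ℝ))) ≃+* Calkin ℝ E) := by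
  set κ : Cardinal.{u} := 2 ^ lam with hκdef
  have hcκ : Cardinal.continuum ≤ κ := by
    rw [← Cardinal.two_power_aleph0]
    exact Cardinal.power_le_power_left two_ne_zero hlam
  have hκ0 : ℵ₀ ≤ κ := Cardinal.aleph0_le_continuum.trans hcκ
  have hκω : κ ^ ℵ₀ = κ := by
    rw [hκdef, ← Cardinal.power_mul, Cardinal.mul_aleph0_eq hlam]
  by_contra hcon
  set Ω := (Order.succ κ).ord with hΩ
  have hlim : Order.IsSuccLimit Ω :=
    Cardinal.isSuccLimit_ord (hκ0.trans (Order.le_succ κ))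
  have hΛ : #lam.out = lam := Cardinal.mk_out lam
  have hex : ∀ α < Ω, ∃ (E : Type u) (_ : NormedAddCommGroup E) (_ : NormedSpace ℝ E)
      (_ : CompleteSpace E) (d : lam.out → E), DenseRange d ∧
      Nonempty ((Unitization ℝ (compactOperators ℝ C(Set.Iic α, ℝ))) ≃+* Calkin ℝ E) := by
    intro α hα
    by_contra hc
    apply hcon
    refine ⟨α, dense_unit κ hcκ α hα, ?_⟩
    intro E _ _ _ hE
    obtain ⟨d, hd⟩ := exists_dense_fun (Λ := lam.out) (E := E) (by rwa [hΛ])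
    by_contra hne
    rw [not_isEmpty_iff] at hne
    exact hc ⟨E, inferInstance, inferInstance, inferInstance, d, hd, hne⟩
  let R1 : Ordinal.{u} → (lam.out × lam.out → ℝ) → Prop := fun α z =>
    1 ≤ α ∧ ∃ (E : Type u) (_ : NormedAddCommGroup E) (_ : NormedSpace ℝ E)
      (_ : CompleteSpace E) (d : lam.out → E), DenseRange d ∧
      Nonempty ((Unitization ℝ (compactOperators ℝ C(Set.Iic α, ℝ))) ≃+* Calkin ℝ E) ∧
      ∀ i j, dist (d i) (d j) = z (i, j)
  have h1Ω : (1 : Ordinal.{u}) < Ω := by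
    have := hlim.succ_lt hlim.bot_lt
    simpa using this
  obtain ⟨z, hz⟩ := pigeon κ hκ0 (Z := lam.out × lam.out → ℝ) (by
      have := card_inv lam.out (by rw [hΛ]; exact hlam)
      rw [hΛ] at this
      exact Cardinal.lift_le.2 this) R1 (by
    intro θ hθ
    refine ⟨max θ 1, le_max_left _ _, max_lt hθ h1Ω, ?_⟩
    obtain ⟨E, i1, i2, i3, d, hd, hn⟩ := hex (max θ 1) (max_lt hθ h1Ω)
    exact ⟨fun p => dist (d p.1) (d p.2), le_max_right _ _, E, i1, i2, i3, d, hd, hn,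
      fun i j => rfl⟩)
  obtain ⟨α0, -, hα0, h1α0, E0, i1, i2, i3, d0, hd0, ⟨φ0⟩, hz0⟩ := hz 0 hlim.bot_lt
  let R2 : Ordinal.{u} → ℕ → Prop := fun α n =>
    ∃ T : C(Set.Iic α0, ℝ) ≃L[ℝ] C(Set.Iic α, ℝ), (∀ x, ‖T x‖ ≤ ((n : ℝ) + 1) * ‖x‖) ∧
        (∀ y, ‖T.symm y‖ ≤ ((n : ℝ) + 1) * ‖y‖)
  obtain ⟨n, hn⟩ := pigeon κ hκ0 (Z := ℕ) (by
      rw [Cardinal.mk_nat, Cardinal.lift_aleph0]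
      exact Cardinal.aleph0_le_lift.2 hκ0) R2 (by
    intro θ hθ
    obtain ⟨α, hθα, hα, h1α, E, j1, j2, j3, d, hd, ⟨φ⟩, hzd⟩ := hz θ hθ
    refine ⟨α, hθα, hα, ?_⟩
    obtain ⟨e⟩ := isom_of_dist d0 d hd0 hd (fun i j => (hz0 i j).trans (hzd i j).symm)
    obtain ⟨ψ⟩ := calkin_congr e
    exact interval_iso α0 α h1α0 ((φ0.trans ψ).trans φ.symm))
  exact final_contra κ hκ0 α0 (card_CK κ hcκ hκω α0 hα0) ((n : ℝ) + 1) (by positivity) hn
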